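/- Suppose q_n(t), q̄_n(t) ∈ ℂ^N and v_n(t) ∈ ℂ (n ∈ ℤ, t ∈ ℝ, differentiable in t) satisfy the system: i q_{n,t} = v_n q_{n+1}, i q̄_{n,t} = −v_n q̄_{n−1}, and v_{n,t} = (1/2) v_n (⟨q_{n+1}, q̄_n⟩ − ⟨q_n, q̄_{n−1}⟩), for all n and t. Then there exists a time-independent sequence k : ℤ → ℂ such that for all n and t: v_n(t) = k_n + (i/2) ⟨q_n(t), q̄_n(t)⟩, and consequently q and q̄ satisfy the closed system i q_{n,t} = ( k_n + (i/2) ⟨q_n, q̄_n⟩ ) q_{n+1} and i q̄_{n,t} = −( k_n + (i/2) ⟨q_n, q̄_n⟩ ) q̄_{n−1} for all n and t. -/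

import Mathlib

open Complex BigOperators

/-- Bilinear pairing on `ℂ^N` (no complex conjugation). -/
noncomputable def pair {N : ℕ} (a b : Fin N → ℂ) : ℂ := ∑ k, a k * b k

/-!
Multiply `d/dt ⟨qₙ, q̄ₙ⟩` by `i` and insert the two evolution equations: the result is
`vₙ (⟨qₙ₊₁, q̄ₙ⟩ - ⟨qₙ, q̄ₙ₋₁⟩)`, which the third equation identifies as `2 dvₙ/dt`. Hence
`vₙ - (i/2) ⟨qₙ, q̄ₙ⟩` is a constant of motion. All of this happens at a single site: the
neighbours `qₙ₊₁` and `q̄ₙ₋₁` may be arbitrary functions `x` and `y` of time, the pairing any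
bounded bilinear form `B`, and the factors `i` and `1/2` any constants `c` and `a`.
-/

section BoundedBilinear

variable {𝕜 𝕂 E F G : Type*} [NontriviallyNormedField 𝕜] [NontriviallyNormedField 𝕂]
  [NormedAlgebra 𝕜 𝕂]
  [NormedAddCommGroup E] [NormedSpace 𝕜 E] [NormedSpace 𝕂 E] [IsScalarTower 𝕜 𝕂 E]
  [NormedAddCommGroup F] [NormedSpace 𝕜 F] [NormedSpace 𝕂 F] [IsScalarTower 𝕜 𝕂 F]
  [NormedAddCommGroup G] [NormedSpace 𝕜 G] [NormedSpace 𝕂 G] [IsScalarTower 𝕜 𝕂 G]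

theorem hasDerivAt_bilinear_restrictScalars (B : E →L[𝕂] F →L[𝕂] G) {f : 𝕜 → E} {g : 𝕜 → F}
    {f' : E} {g' : F} {t : 𝕜} (hf : HasDerivAt f f' t) (hg : HasDerivAt g g' t) :
    HasDerivAt (fun s ↦ B (f s) (g s)) (B (f t) g' + B f' (g t)) t :=
  (B.bilinearRestrictScalars 𝕜).hasDerivAt_of_bilinear (fun _ ↦ hf) (fun _ ↦ hg)

theorem smul_deriv_bilinear_of_smul_deriv_eq (B : E →L[𝕂] F →L[𝕂] G) {f : 𝕜 → E} {g : 𝕜 → F}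
    {t : 𝕜} (hf : DifferentiableAt 𝕜 f t) (hg : DifferentiableAt 𝕜 g t)
    {c w : 𝕂} {x : E} {y : F}
    (hfx : c • deriv f t = w • x) (hgy : c • deriv g t = -(w • y)) :
    c • deriv (fun s ↦ B (f s) (g s)) t = w • (B x (g t) - B (f t) y) :=
  calc c • deriv (fun s ↦ B (f s) (g s)) t
      = B (f t) (c • deriv g t) + B (c • deriv f t) (g t) := by
        rw [(hasDerivAt_bilinear_restrictScalars B hf.hasDerivAt hg.hasDerivAt).deriv, smul_add,
          map_smul, B.map_smul₂]
    _ = w • (B x (g t) - B (f t) y) := by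
        rw [hfx, hgy, map_neg, map_smul, B.map_smul₂, smul_sub, neg_add_eq_sub]

end BoundedBilinear

theorem stmt15_general {𝕜 𝕂 E F : Type*} [RCLike 𝕜] [NontriviallyNormedField 𝕂]
    [NormedAlgebra 𝕜 𝕂]
    [NormedAddCommGroup E] [NormedSpace 𝕜 E] [NormedSpace 𝕂 E] [IsScalarTower 𝕜 𝕂 E]
    [NormedAddCommGroup F] [NormedSpace 𝕜 F] [NormedSpace 𝕂 F] [IsScalarTower 𝕜 𝕂 F]
    (B : E →L[𝕂] F →L[𝕂] 𝕂) (a c : 𝕂) {q x : 𝕜 → E} {p y : 𝕜 → F} {v : 𝕜 → 𝕂}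
    (hq : Differentiable 𝕜 q) (hp : Differentiable 𝕜 p) (hv : Differentiable 𝕜 v)
    (hqx : ∀ t, c • deriv q t = v t • x t) (hpy : ∀ t, c • deriv p t = -(v t • y t))
    (hv' : ∀ t, deriv v t = a * v t * (B (x t) (p t) - B (q t) (y t))) :
    ∃ k : 𝕂, ∀ t, v t = k + a * c * B (q t) (p t) ∧
      c • deriv q t = (k + a * c * B (q t) (p t)) • x t ∧
      c • deriv p t = -((k + a * c * B (q t) (p t)) • y t) := by
  have hB : Differentiable 𝕜 fun s ↦ B (q s) (p s) := fun t ↦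
    (hasDerivAt_bilinear_restrictScalars B (hq t).hasDerivAt (hp t).hasDerivAt).differentiableAt
  have deriv_eq (t : 𝕜) : deriv v t = deriv (fun s ↦ a * c * B (q s) (p s)) t :=
    calc deriv v t = a * (v t * (B (x t) (p t) - B (q t) (y t))) := by rw [hv', mul_assoc]
      _ = a * (c * deriv (fun s ↦ B (q s) (p s)) t) := by
        rw [← smul_eq_mul (v t), ← smul_eq_mul c,
          smul_deriv_bilinear_of_smul_deriv_eq B (hq t) (hp t) (hqx t) (hpy t)]
      _ = deriv (fun s ↦ a * c * B (q s) (p s)) t := by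
        rw [deriv_const_mul _ (hB t), mul_assoc]
  obtain ⟨k, hk⟩ := isOpen_univ.exists_eq_add_of_deriv_eq isPreconnected_univ
    hv.differentiableOn (hB.const_mul (a * c)).differentiableOn fun t _ ↦ deriv_eq t
  have v_eq (t : 𝕜) : v t = k + a * c * B (q t) (p t) := (hk (Set.mem_univ t)).trans (add_comm _ _)
  refine ⟨k, fun t ↦ ?_⟩
  rw [← v_eq t]
  exact ⟨rfl, hqx t, hpy t⟩

/-- The pairing `pair` as a continuous bilinear map, so that the calculus of bounded bilinear
maps applies to it. -/
noncomputable def pairCLM (N : ℕ) : (Fin N → ℂ) →L[ℂ] (Fin N → ℂ) →L[ℂ] ℂ :=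
  (dotProductBilin ℂ ℂ).toContinuousBilinearMap

theorem pairCLM_apply {N : ℕ} (a b : Fin N → ℂ) : pairCLM N a b = pair a b := rfl

theorem stmt15 {N : ℕ} (hN : 1 ≤ N)
    (q qb : ℤ → ℝ → Fin N → ℂ) (v : ℤ → ℝ → ℂ)
    (hqd : ∀ n, Differentiable ℝ (q n)) (hqbd : ∀ n, Differentiable ℝ (qb n))
    (hvd : ∀ n, Differentiable ℝ (v n))
    (h1 : ∀ (n : ℤ) (t : ℝ), Complex.I • deriv (q n) t = (v n t) • q (n+1) t)
    (h2 : ∀ (n : ℤ) (t : ℝ), Complex.I • deriv (qb n) t = -((v n t) • qb (n-1) t))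
    (h3 : ∀ (n : ℤ) (t : ℝ), deriv (v n) t
      = (1/2) * v n t * (pair (q (n+1) t) (qb n t) - pair (q n t) (qb (n-1) t))) :
    ∃ k : ℤ → ℂ, ∀ (n : ℤ) (t : ℝ),
      (v n t = k n + (Complex.I/2) * pair (q n t) (qb n t))
      ∧ (Complex.I • deriv (q n) t
          = (k n + (Complex.I/2) * pair (q n t) (qb n t)) • q (n+1) t)
      ∧ (Complex.I • deriv (qb n) t
          = -((k n + (Complex.I/2) * pair (q n t) (qb n t)) • qb (n-1) t)) := by
  simp only [← pairCLM_apply, ← one_div_mul_eq_div (2 : ℂ) I] at h3 ⊢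
  exact Classical.skolem.mp fun n ↦
    stmt15_general (pairCLM N) (1 / 2) I (hqd n) (hqbd n) (hvd n) (h1 n) (h2 n) (h3 n)
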